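/- For all ρ > 0, p∥ > 0, p⊥ > 0, the 10×10 real matrix T, which is zero off the stated entries, has diagonal entries (1/(2√(2ρ)), 1/(2√(2ρ)), √p⊥/(2√ρ), √p⊥/(2ρ), t₅₅, t₆₆, √p⊥/(2ρ), √p⊥/(2√ρ), 1/(2√(2ρ)), 1/(2√(2ρ))) and symmetric off-diagonal entries t₅₆ = t₆₅, where with D = 5p∥² + 4p∥ρ + ρ² one sets t₅₅ = √ρ(2p∥ + ρ)/(2√D), t₅₆ = p∥√ρ/(2√D), t₆₆ = p∥(5p∥ + 2ρ)/(2√(ρD)), is symmetric positive definite and satisfies T² = 𝒴, where 𝒴 is the 10×10 matrix that is zero off the stated entries, with diagonal (1/(8ρ), 1/(8ρ), p⊥/(4ρ), p⊥/(4ρ²), ρ/4, 5p∥²/(4ρ), p⊥/(4ρ²), p⊥/(4ρ), 1/(8ρ), 1/(8ρ)) and symmetric entries 𝒴₅₆ = 𝒴₆₅ = p∥/4; that is, T is the positive square root of 𝒴 used in the Barth scaling of the GLM-CGL right eigenvectors. -/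

import Mathlib

noncomputable section

/-- Diagonal entries of the Barth scaling matrix `T` (indices 1..10 ↦ 0..9). -/
def Tdiag (ρ pl pp : ℝ) : Fin 10 → ℝ :=
  ![1 / (2 * Real.sqrt (2 * ρ)),
    1 / (2 * Real.sqrt (2 * ρ)),
    Real.sqrt pp / (2 * Real.sqrt ρ),
    Real.sqrt pp / (2 * ρ),
    Real.sqrt ρ * (2 * pl + ρ) / (2 * Real.sqrt (5 * pl ^ 2 + 4 * pl * ρ + ρ ^ 2)),
    pl * (5 * pl + 2 * ρ) / (2 * Real.sqrt (ρ * (5 * pl ^ 2 + 4 * pl * ρ + ρ ^ 2))),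
    Real.sqrt pp / (2 * ρ),
    Real.sqrt pp / (2 * Real.sqrt ρ),
    1 / (2 * Real.sqrt (2 * ρ)),
    1 / (2 * Real.sqrt (2 * ρ))]

/-- The Barth scaling matrix `T`: diagonal entries `Tdiag`, symmetric entries
`t₅₆ = t₆₅ = p∥√ρ/(2√D)` (at indices (4,5),(5,4) in 0-based numbering), zero elsewhere. -/
def Tmat (ρ pl pp : ℝ) : Matrix (Fin 10) (Fin 10) ℝ :=
  Matrix.of fun i j =>
    if i = j then Tdiag ρ pl pp i
    else if (i = 4 ∧ j = 5) ∨ (i = 5 ∧ j = 4) then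
      pl * Real.sqrt ρ / (2 * Real.sqrt (5 * pl ^ 2 + 4 * pl * ρ + ρ ^ 2))
    else 0

/-- Diagonal entries of the matrix `𝒴`. -/
def Ydiag (ρ pl pp : ℝ) : Fin 10 → ℝ :=
  ![1 / (8 * ρ), 1 / (8 * ρ), pp / (4 * ρ), pp / (4 * ρ ^ 2),
    ρ / 4, 5 * pl ^ 2 / (4 * ρ), pp / (4 * ρ ^ 2), pp / (4 * ρ),
    1 / (8 * ρ), 1 / (8 * ρ)]

/-- The matrix `𝒴`: diagonal entries `Ydiag`, symmetric entries `𝒴₅₆ = 𝒴₆₅ = p∥/4`,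
zero elsewhere. -/
def Ymat (ρ pl pp : ℝ) : Matrix (Fin 10) (Fin 10) ℝ :=
  Matrix.of fun i j =>
    if i = j then Ydiag ρ pl pp i
    else if (i = 4 ∧ j = 5) ∨ (i = 5 ∧ j = 4) then pl / 4
    else 0

/-!
Apart from the entries with both indices in `{5, 6}` (`{4, 5}` counting from zero), `T` and `𝒴` are
diagonal, and there the claim is about square roots of numbers. The remaining block `M` of `𝒴` has
determinant `δ² = (p∥/2)²`, and by Cayley–Hamilton a 2 × 2 matrix with `det M = δ²` and
`tr M + 2δ = τ²` has the square root `τ⁻¹(M + δ)`, which has determinant `δ`. Here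
`τ = √D / (2√ρ)`, and this square root is the block of `T`; it is positive definite since its
determinant `p∥/2` and its diagonal are positive.
-/

open Matrix

section CoupledDiagonal

variable {ι R : Type*} [DecidableEq ι]

/-- The diagonal matrix `d` with an additional symmetric coupling `b` between the indices `p ≠ q`:
the common shape of the Barth scaling matrix and its square. It is written as a sum of matrix units
so that products can be expanded algebraically; for `p = q` the two couplings would add up. -/
def coupledDiagonal [AddZeroClass R] (d : ι → R) (p q : ι) (b : R) : Matrix ι ι R :=
  diagonal d + single p q b + single q p b

theorem coupledDiagonal_apply [AddZeroClass R] {p q : ι} (hpq : p ≠ q) (d : ι → R) (b : R)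
    (i j : ι) :
    coupledDiagonal d p q b i j =
      if i = j then d i else if (i = p ∧ j = q) ∨ (i = q ∧ j = p) then b else 0 := by
  simp only [coupledDiagonal, Matrix.add_apply, diagonal_apply, single_apply]
  grind [add_zero, zero_add]

theorem isSymm_coupledDiagonal [AddCommMonoid R] (d : ι → R) (p q : ι) (b : R) :
    (coupledDiagonal d p q b).IsSymm := by
  simp only [IsSymm, coupledDiagonal, transpose_add, diagonal_transpose, transpose_single]
  exact add_right_comm _ _ _

theorem diagonal_mul_single [Fintype ι] [NonUnitalNonAssocSemiring R] (d : ι → R) (p q : ι)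
    (b : R) : diagonal d * single p q b = single p q (d p * b) := by
  ext i j
  simp only [diagonal_mul, single_apply, mul_ite, mul_zero]
  grind

theorem single_mul_diagonal [Fintype ι] [NonUnitalNonAssocSemiring R] (d : ι → R) (p q : ι)
    (b : R) : single p q b * diagonal d = single p q (b * d q) := by
  ext i j
  simp only [mul_diagonal, single_apply, ite_mul, zero_mul]
  grind

theorem coupledDiagonal_mul_self [Fintype ι] [CommSemiring R] {p q : ι} (hpq : p ≠ q)
    (d : ι → R) (b : R) :
    coupledDiagonal d p q b * coupledDiagonal d p q b =
      coupledDiagonal (d * d + Pi.single p (b * b) + Pi.single q (b * b)) p q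
        (b * (d p + d q)) := by
  have hdiag : diagonal (d * d + Pi.single p (b * b) + Pi.single q (b * b)) =
      diagonal d * diagonal d + single p p (b * b) + single q q (b * b) := by
    rw [diagonal_mul_diagonal', ← diagonal_single, ← diagonal_single, diagonal_add, diagonal_add]
    rfl
  simp only [coupledDiagonal, hdiag, add_mul, mul_add, diagonal_mul_single, single_mul_diagonal,
    single_mul_single_same, single_mul_single_of_ne _ _ _ _ hpq,
    single_mul_single_of_ne _ _ _ _ hpq.symm, single_add, mul_comm b]
  abel

theorem coupledDiagonal_eq_transpose_mul_diagonal_mul [Fintype ι] [Field R] {p q : ι}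
    (hpq : p ≠ q) {d : ι → R} (hp : d p ≠ 0) (b : R) :
    coupledDiagonal d p q b =
      (transvection p q (b / d p))ᵀ * diagonal (d - Pi.single q (b * b / d p)) *
        transvection p q (b / d p) := by
  have hdiag : diagonal (d - Pi.single q (b * b / d p)) =
      diagonal d - single q q (b * b / d p) := by
    rw [← diagonal_single, diagonal_sub]
    rfl
  simp only [coupledDiagonal, hdiag, transvection, transpose_add, transpose_one, transpose_single,
    add_mul, mul_add, sub_mul, mul_sub, one_mul, mul_one, diagonal_mul_single,
    single_mul_diagonal, single_mul_single_same, single_mul_single_of_ne _ _ _ _ hpq,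
    single_mul_single_of_ne _ _ _ _ hpq.symm, mul_div_cancel₀ _ hp, div_mul_cancel₀ _ hp]
  rw [zero_mul, mul_div_assoc]
  abel

theorem posDef_coupledDiagonal [Finite ι] [Field R] [LinearOrder R] [StarRing R]
    [TrivialStar R] [StarOrderedRing R] {p q : ι} (hpq : p ≠ q) {d : ι → R} {b : R}
    (hd : ∀ i, 0 < d i) (hb : b * b < d p * d q) :
    (coupledDiagonal d p q b).PosDef := by
  cases nonempty_fintype ι
  have hunit : IsUnit (transvection p q (b / d p)) := by
    rw [isUnit_iff_isUnit_det, det_transvection_of_ne p q hpq]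
    exact isUnit_one
  rw [coupledDiagonal_eq_transpose_mul_diagonal_mul hpq (hd p).ne',
    ← conjTranspose_eq_transpose_of_trivial, ← star_eq_conjTranspose,
    hunit.posDef_star_left_conjugate_iff, posDef_diagonal_iff]
  intro i
  obtain rfl | hi := eq_or_ne i q
  · rw [Pi.sub_apply, Pi.single_eq_same, sub_pos, div_lt_iff₀' (hd p)]
    exact hb
  · rw [Pi.sub_apply, Pi.single_eq_of_ne hi, sub_zero]
    exact hd i

end CoupledDiagonal

section TwoByTwo

theorem mul_apply_fin_two {R : Type*} [NonUnitalNonAssocSemiring R]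
    (A B : Matrix (Fin 2) (Fin 2) R) (i j : Fin 2) :
    (A * B) i j = A i 0 * B 0 j + A i 1 * B 1 j := by
  rw [mul_apply, Fin.sum_univ_two]

theorem mul_self_fin_two {R : Type*} [CommRing R] (M : Matrix (Fin 2) (Fin 2) R) :
    M * M = M.trace • M - M.det • (1 : Matrix (Fin 2) (Fin 2) R) := by
  nontriviality R
  have cayleyHamilton := aeval_self_charpoly M
  simp only [charpoly_fin_two, map_add, map_sub, map_mul, Polynomial.aeval_X,
    Polynomial.aeval_C, Algebra.algebraMap_eq_smul_one, Matrix.smul_mul, one_mul, sq]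
    at cayleyHamilton
  exact sub_eq_zero.mp (by rw [← cayleyHamilton]; abel)

variable {K : Type*} [Field K] {M : Matrix (Fin 2) (Fin 2) K} {δ τ : K}

theorem inv_smul_add_smul_one_mul_self (hτ₀ : τ ≠ 0) (hdet : M.det = δ ^ 2)
    (htrace : M.trace + 2 * δ = τ ^ 2) :
    (τ⁻¹ • (M + δ • 1)) * (τ⁻¹ • (M + δ • 1)) = M := by
  have hsq : (M + δ • 1) * (M + δ • 1) = τ ^ 2 • M := by
    rw [add_mul, mul_add, mul_add, mul_self_fin_two, hdet, ← htrace]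
    simp only [Matrix.mul_smul, Matrix.smul_mul, mul_one, one_mul]
    module
  rw [smul_mul_smul_comm, hsq, smul_smul, ← sq, ← mul_pow, inv_mul_cancel₀ hτ₀, one_pow, one_smul]

theorem det_inv_smul_add_smul_one (hτ₀ : τ ≠ 0) (hdet : M.det = δ ^ 2)
    (htrace : M.trace + 2 * δ = τ ^ 2) :
    (τ⁻¹ • (M + δ • 1)).det = δ := by
  have hshift : (M + δ • 1).det = δ * τ ^ 2 := by
    rw [← htrace]
    rw [det_fin_two] at hdet
    simp only [det_fin_two, trace_fin_two, Matrix.add_apply, Matrix.smul_apply, smul_eq_mul,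
      one_apply_eq, one_apply_ne zero_ne_one, one_apply_ne one_ne_zero]
    linear_combination hdet
  rw [det_smul, hshift, Fintype.card_fin]
  field_simp

end TwoByTwo

section BarthScaling

variable {ρ pl pp : ℝ}

/-- The entry `t₅₆` of the Barth scaling matrix. -/
def Tcoupling (ρ pl : ℝ) : ℝ :=
  pl * √ρ / (2 * √(5 * pl ^ 2 + 4 * pl * ρ + ρ ^ 2))

/-- The block of `𝒴` with indices `5, 6`, the only part of `𝒴` that is not diagonal. -/
def Yblock (ρ pl : ℝ) : Matrix (Fin 2) (Fin 2) ℝ :=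
  !![ρ / 4, pl / 4; pl / 4, 5 * pl ^ 2 / (4 * ρ)]

/-- The block of the Barth scaling matrix with indices `5, 6`. -/
def Tblock (ρ pl : ℝ) : Matrix (Fin 2) (Fin 2) ℝ :=
  !![√ρ * (2 * pl + ρ) / (2 * √(5 * pl ^ 2 + 4 * pl * ρ + ρ ^ 2)), Tcoupling ρ pl;
    Tcoupling ρ pl, pl * (5 * pl + 2 * ρ) / (2 * √(ρ * (5 * pl ^ 2 + 4 * pl * ρ + ρ ^ 2)))]

/-- The normalization `τ = √(tr M + 2 √(det M))` of the square root of the block `M = Yblock`. -/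
def blockScale (ρ pl : ℝ) : ℝ :=
  √(5 * pl ^ 2 + 4 * pl * ρ + ρ ^ 2) / (2 * √ρ)

theorem Tmat_eq_coupledDiagonal (ρ pl pp : ℝ) :
    Tmat ρ pl pp = coupledDiagonal (Tdiag ρ pl pp) 4 5 (Tcoupling ρ pl) := by
  ext i j
  rw [coupledDiagonal_apply (by decide)]
  rfl

theorem Ymat_eq_coupledDiagonal (ρ pl pp : ℝ) :
    Ymat ρ pl pp = coupledDiagonal (Ydiag ρ pl pp) 4 5 (pl / 4) := by
  ext i j
  rw [coupledDiagonal_apply (by decide)]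
  rfl

theorem blockScale_pos (hρ : 0 < ρ) (hpl : 0 < pl) : 0 < blockScale ρ pl := by
  unfold blockScale
  positivity

theorem det_Yblock (hρ : ρ ≠ 0) : (Yblock ρ pl).det = (pl / 2) ^ 2 := by
  rw [Yblock, det_fin_two_of]
  field_simp
  ring

theorem trace_Yblock_add (hρ : 0 < ρ) (hpl : 0 < pl) :
    (Yblock ρ pl).trace + 2 * (pl / 2) = blockScale ρ pl ^ 2 := by
  rw [Yblock, trace_fin_two_of, blockScale, div_pow, mul_pow, Real.sq_sqrt (by positivity),
    Real.sq_sqrt hρ.le]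
  field_simp
  ring

theorem Tblock_eq_inv_smul_add_smul_one (hρ : 0 < ρ) :
    Tblock ρ pl = (blockScale ρ pl)⁻¹ • (Yblock ρ pl + (pl / 2) • 1) := by
  have hsqrt : √ρ ^ 2 = ρ := Real.sq_sqrt hρ.le
  have h₅₅ : √ρ * (2 * pl + ρ) / (2 * √(5 * pl ^ 2 + 4 * pl * ρ + ρ ^ 2)) =
      (blockScale ρ pl)⁻¹ * (ρ / 4 + pl / 2) := by
    rw [blockScale, inv_div]
    ring
  have h₅₆ : Tcoupling ρ pl = (blockScale ρ pl)⁻¹ * (pl / 4) := by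
    rw [Tcoupling, blockScale, inv_div]
    ring
  have h₆₆ : pl * (5 * pl + 2 * ρ) / (2 * √(ρ * (5 * pl ^ 2 + 4 * pl * ρ + ρ ^ 2))) =
      (blockScale ρ pl)⁻¹ * (5 * pl ^ 2 / (4 * ρ) + pl / 2) := by
    rw [blockScale, inv_div, Real.sqrt_mul hρ.le]
    field_simp
    rw [hsqrt]
    ring
  rw [Tblock, Yblock, h₅₅, h₅₆, h₆₆]
  simp [one_fin_two]

theorem Tblock_mul_self (hρ : 0 < ρ) (hpl : 0 < pl) :
    Tblock ρ pl * Tblock ρ pl = Yblock ρ pl := by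
  rw [Tblock_eq_inv_smul_add_smul_one hρ]
  exact inv_smul_add_smul_one_mul_self (blockScale_pos hρ hpl).ne' (det_Yblock hρ.ne')
    (trace_Yblock_add hρ hpl)

theorem det_Tblock (hρ : 0 < ρ) (hpl : 0 < pl) : (Tblock ρ pl).det = pl / 2 := by
  rw [Tblock_eq_inv_smul_add_smul_one hρ]
  exact det_inv_smul_add_smul_one (blockScale_pos hρ hpl).ne' (det_Yblock hρ.ne')
    (trace_Yblock_add hρ hpl)

theorem Tdiag_pos (hρ : 0 < ρ) (hpl : 0 < pl) (hpp : 0 < pp) (i : Fin 10) :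
    0 < Tdiag ρ pl pp i := by
  fin_cases i <;> (dsimp [Tdiag]; positivity)

theorem Tcoupling_mul_self_lt (hρ : 0 < ρ) (hpl : 0 < pl) :
    Tcoupling ρ pl * Tcoupling ρ pl < Tdiag ρ pl pp 4 * Tdiag ρ pl pp 5 := by
  have hdet : Tdiag ρ pl pp 4 * Tdiag ρ pl pp 5 - Tcoupling ρ pl * Tcoupling ρ pl = pl / 2 :=
    (det_fin_two_of _ _ _ _).symm.trans (det_Tblock hρ hpl)
  linarith

theorem Tcoupling_mul_add (hρ : 0 < ρ) (hpl : 0 < pl) :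
    Tcoupling ρ pl * (Tdiag ρ pl pp 4 + Tdiag ρ pl pp 5) = pl / 4 := by
  have hentry : Tdiag ρ pl pp 4 * Tcoupling ρ pl + Tcoupling ρ pl * Tdiag ρ pl pp 5 = pl / 4 :=
    (mul_apply_fin_two _ _ 0 1).symm.trans (congr_fun₂ (Tblock_mul_self hρ hpl) 0 1)
  linarith

theorem Tdiag_mul_self_of_ne (hρ : 0 < ρ) (hpp : 0 ≤ pp) {i : Fin 10} (h₄ : i ≠ 4)
    (h₅ : i ≠ 5) : Tdiag ρ pl pp i * Tdiag ρ pl pp i = Ydiag ρ pl pp i := by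
  have hrecip : 1 / (2 * √(2 * ρ)) * (1 / (2 * √(2 * ρ))) = 1 / (8 * ρ) := by
    rw [← sq, div_pow, mul_pow, Real.sq_sqrt (by positivity)]
    ring
  have hratio : √pp / (2 * √ρ) * (√pp / (2 * √ρ)) = pp / (4 * ρ) := by
    rw [← sq, div_pow, mul_pow, Real.sq_sqrt hpp, Real.sq_sqrt hρ.le]
    ring
  have hquot : √pp / (2 * ρ) * (√pp / (2 * ρ)) = pp / (4 * ρ ^ 2) := by
    rw [← sq, div_pow, mul_pow, Real.sq_sqrt hpp]
    ring
  fin_cases i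
  exacts [hrecip, hrecip, hratio, hquot, absurd rfl h₄, absurd rfl h₅, hquot, hratio, hrecip,
    hrecip]

theorem Tdiag_mul_self_add (hρ : 0 < ρ) (hpl : 0 < pl) (hpp : 0 ≤ pp) :
    Tdiag ρ pl pp * Tdiag ρ pl pp + Pi.single 4 (Tcoupling ρ pl * Tcoupling ρ pl) +
      Pi.single 5 (Tcoupling ρ pl * Tcoupling ρ pl) = Ydiag ρ pl pp := by
  have h₅₅ : Tdiag ρ pl pp 4 * Tdiag ρ pl pp 4 + Tcoupling ρ pl * Tcoupling ρ pl =
      Ydiag ρ pl pp 4 :=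
    (mul_apply_fin_two _ _ 0 0).symm.trans (congr_fun₂ (Tblock_mul_self hρ hpl) 0 0)
  have h₆₆ : Tcoupling ρ pl * Tcoupling ρ pl + Tdiag ρ pl pp 5 * Tdiag ρ pl pp 5 =
      Ydiag ρ pl pp 5 :=
    (mul_apply_fin_two _ _ 1 1).symm.trans (congr_fun₂ (Tblock_mul_self hρ hpl) 1 1)
  ext i
  simp only [Pi.add_apply, Pi.mul_apply]
  by_cases h₄ : i = 4
  · rw [h₄, Pi.single_eq_same, Pi.single_eq_of_ne (by decide), add_zero, h₅₅]
  by_cases h₅ : i = 5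
  · rw [h₅, Pi.single_eq_same, Pi.single_eq_of_ne (by decide), add_zero, add_comm, h₆₆]
  · rw [Pi.single_eq_of_ne h₄, Pi.single_eq_of_ne h₅, add_zero, add_zero,
      Tdiag_mul_self_of_ne hρ hpp h₄ h₅]

end BarthScaling

/-- for all `ρ, p∥, p⊥ > 0`, the Barth scaling matrix `T` is symmetric
positive definite and satisfies `T² = 𝒴`; i.e. `T` is the positive square root of `𝒴`. -/
theorem barth_scaling_matrix_is_positive_sqrt
    (ρ pl pp : ℝ) (hρ : 0 < ρ) (hpl : 0 < pl) (hpp : 0 < pp) :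
    (Tmat ρ pl pp).IsSymm ∧ (Tmat ρ pl pp).PosDef ∧
      Tmat ρ pl pp * Tmat ρ pl pp = Ymat ρ pl pp := by
  rw [Tmat_eq_coupledDiagonal, Ymat_eq_coupledDiagonal]
  refine ⟨isSymm_coupledDiagonal _ _ _ _, ?_, ?_⟩
  · exact posDef_coupledDiagonal (by decide) (Tdiag_pos hρ hpl hpp) (Tcoupling_mul_self_lt hρ hpl)
  · rw [coupledDiagonal_mul_self (by decide), Tdiag_mul_self_add hρ hpl hpp.le,
      Tcoupling_mul_add hρ hpl]

end
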